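/- arXiv:1310.3326 — 8 statements merged into one kernel-verified Lean document; each statement's English description precedes it below -/
import Mathlib

section
/- Define ℍ^𝒜₊ := {ξ ∈ ℍ^𝒜 : σξ = ξ} and ℍ^𝒜₋ := {ξ ∈ ℍ^𝒜 : σξ = −ξ}. An element ξ ∈ ℍ^𝒜 is invertible in ℍ^𝒜 if and only if ξ ∉ ℍ^𝒜₊ ∪ ℍ^𝒜₋. -/
/-!
The algebra of Lorentz numbers `𝒜 = {x + σy}` with `σ² = 1` is identified with the
product ring `ℝ × ℝ` via `x + σy ↦ (x + y, x − y)`, under which `σ ↦ (1, −1)`.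
`ℍ^𝒜` is the quaternion algebra over this commutative ring.
-/

noncomputable section

/-- The algebra of Lorentz numbers `𝒜`, identified with the product ring `ℝ × ℝ`. -/
abbrev LorentzA : Type := ℝ × ℝ

/-- `ℍ^𝒜`, the quaternions with coefficients in the Lorentz numbers `𝒜`. -/
abbrev HA : Type := Quaternion LorentzA

/-- The Lorentz number `σ`, corresponding to `(1, -1)` in `ℝ × ℝ`. -/
def σA : LorentzA := (1, -1)

/-- `σ` viewed as an element of `ℍ^𝒜`. -/
def σQ : HA := ((σA : LorentzA) : HA)

/-- The embedding of `ℝ` in `𝒜` (the diagonal of `ℝ × ℝ`). -/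
def toA (x : ℝ) : LorentzA := (x, x)

/-- The `𝒜`-valued pairing `H` on `ℍ^𝒜`: `H(ξ, ξ') = a₀a₀' + a₁a₁' + a₂a₂' + a₃a₃'`. -/
def Hform (ξ ξ' : HA) : LorentzA :=
  ξ.re * ξ'.re + ξ.imI * ξ'.imI + ξ.imJ * ξ'.imJ + ξ.imK * ξ'.imK

/-- The conjugation `x + σy ↦ x − σy` of `𝒜`, i.e. the swap of the factors of `ℝ × ℝ`. -/
def swapA (a : LorentzA) : LorentzA := (a.2, a.1)

/-- The hat operation on `ℍ^𝒜`, applying the conjugation of `𝒜` to each coefficient. -/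
def hatQ (ξ : HA) : HA := ⟨swapA ξ.re, swapA ξ.imI, swapA ξ.imJ, swapA ξ.imK⟩

/-- The imaginary unit `I` of `ℍ^𝒜`. -/
def Iq : HA := ⟨0, 1, 0, 0⟩
/-- The imaginary unit `J` of `ℍ^𝒜`. -/
def Jq : HA := ⟨0, 0, 1, 0⟩
/-- The imaginary unit `K` of `ℍ^𝒜`. -/
def Kq : HA := ⟨0, 0, 0, 1⟩

/-- The embedding of Euclidean `ℝ⁴` into `ℍ^𝒜`: `(x₀,x₁,x₂,x₃) ↦ σx₀·1 + x₁I + x₂J + x₃K`. -/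
def embR4 (x₀ x₁ x₂ x₃ : ℝ) : HA := ⟨(x₀, -x₀), toA x₁, toA x₂, toA x₃⟩

/-- `ℝ⁴` as a subset of `ℍ^𝒜`: `{ξ : hat(conj ξ) = -ξ}`. -/
def R4set : Set HA := {ξ | hatQ (star ξ) = -ξ}

/-- The embedding `ι : ℍ → ℍ^𝒜` induced by the diagonal inclusion `ℝ → ℝ × ℝ ≅ 𝒜`. -/
def iotaH (q : Quaternion ℝ) : HA := ⟨toA q.re, toA q.imI, toA q.imJ, toA q.imK⟩

/-- Componentwise cosine on `𝒜 ≅ ℝ × ℝ`. -/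
def cosA (a : LorentzA) : LorentzA := (Real.cos a.1, Real.cos a.2)
/-- Componentwise sine on `𝒜 ≅ ℝ × ℝ`. -/
def sinA (a : LorentzA) : LorentzA := (Real.sin a.1, Real.sin a.2)

/-- The Lorentz number `θ₁ + σθ₂`, i.e. `(θ₁ + θ₂, θ₁ − θ₂)` in `ℝ × ℝ`. -/
def mkA (θ₁ θ₂ : ℝ) : LorentzA := (θ₁ + θ₂, θ₁ - θ₂)

/-- The cross product of two imaginary elements of `ℍ^𝒜`: `ξ × ξ' = (ξξ' − ξ'ξ)/2`. -/
def crossP (ξ ξ' : HA) : HA := (1/2 : ℝ) • (ξ * ξ' - ξ' * ξ)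

/-- `(1+σ)/2` in `ℍ^𝒜`. -/
def halfPlus : HA := (1/2 : ℝ) • ((1 : HA) + σQ)
/-- `(1−σ)/2` in `ℍ^𝒜`. -/
def halfMinus : HA := (1/2 : ℝ) • ((1 : HA) - σQ)

/-- A quaternion over the Lorentz numbers from its eight real coordinates. -/
def mkHA (a b c d a' b' c' d' : ℝ) : HA := ⟨(a, a'), (b, b'), (c, c'), (d, d')⟩

theorem mkHA_mul (a b c d a' b' c' d' p q r s p' q' r' s' : ℝ) :
    mkHA a b c d a' b' c' d' * mkHA p q r s p' q' r' s' =
      mkHA (a * p - b * q - c * r - d * s) (a * q + b * p + c * s - d * r)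
        (a * r - b * s + c * p + d * q) (a * s + b * r - c * q + d * p)
        (a' * p' - b' * q' - c' * r' - d' * s') (a' * q' + b' * p' + c' * s' - d' * r')
        (a' * r' - b' * s' + c' * p' + d' * q') (a' * s' + b' * r' - c' * q' + d' * p') := by
  apply Quaternion.ext
  · exact Quaternion.re_mul _ _
  · exact Quaternion.imI_mul _ _
  · exact Quaternion.imJ_mul _ _
  · exact Quaternion.imK_mul _ _

theorem mkHA_one : (1 : HA) = mkHA 1 0 0 0 1 0 0 0 := rfl

theorem mkHA_neg (a b c d a' b' c' d' : ℝ) : -mkHA a b c d a' b' c' d' =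
    mkHA (-a) (-b) (-c) (-d) (-a') (-b') (-c') (-d') := rfl

theorem mkHA_sig : σQ = mkHA 1 0 0 0 (-1) 0 0 0 := rfl

/-- An element `ξ ∈ ℍ^𝒜` is invertible iff it does not belong to
`ℍ^𝒜₊ ∪ ℍ^𝒜₋`, where `ℍ^𝒜₊ = {ξ : σξ = ξ}` and `ℍ^𝒜₋ = {ξ : σξ = −ξ}`. -/
theorem isUnit_iff_not_mem_plus_union_minus (ξ : HA) :
    IsUnit ξ ↔ ξ ∉ ({η : HA | σQ * η = η} ∪ {η : HA | σQ * η = -η}) := by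
  constructor
  · intro h hmem
    rcases hmem with h1 | h1
    · have h2 : σQ = 1 := h.mul_right_cancel (by rw [one_mul]; exact h1)
      have h3 : (-1 : ℝ) = 1 := congrArg (fun q : HA => q.re.2) h2
      norm_num at h3
    · have h2 : σQ = -1 := h.mul_right_cancel (Eq.trans h1 (neg_one_mul ξ).symm)
      have h3 : (1 : ℝ) = -1 := congrArg (fun q : HA => q.re.1) h2
      norm_num at h3
  · intro h
    obtain ⟨hp, hm⟩ := not_or.mp h
    obtain ⟨⟨a, a'⟩, ⟨b, b'⟩, ⟨c, c'⟩, ⟨d, d'⟩⟩ := ξ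
    change ¬ (σQ * mkHA a b c d a' b' c' d' = mkHA a b c d a' b' c' d') at hp
    change ¬ (σQ * mkHA a b c d a' b' c' d' = -mkHA a b c d a' b' c' d') at hm
    change IsUnit (mkHA a b c d a' b' c' d')
    rw [mkHA_sig, mkHA_mul] at hp hm
    rw [mkHA_neg] at hm
    have key : ∀ x y z w : ℝ, x ^ 2 + y ^ 2 + z ^ 2 + w ^ 2 = 0 →
        x = 0 ∧ y = 0 ∧ z = 0 ∧ w = 0 := by
      intro x y z w h0
      refine ⟨?_, ?_, ?_, ?_⟩ <;>
        nlinarith [sq_nonneg x, sq_nonneg y, sq_nonneg z, sq_nonneg w]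
    have h1 : a ^ 2 + b ^ 2 + c ^ 2 + d ^ 2 ≠ 0 := by
      intro h0
      obtain ⟨rfl, rfl, rfl, rfl⟩ := key _ _ _ _ h0
      apply hm
      congr 1 <;> ring
    have h2 : a' ^ 2 + b' ^ 2 + c' ^ 2 + d' ^ 2 ≠ 0 := by
      intro h0
      obtain ⟨rfl, rfl, rfl, rfl⟩ := key _ _ _ _ h0
      apply hp
      congr 1 <;> ring
    obtain ⟨n, hn⟩ : ∃ n, n = a ^ 2 + b ^ 2 + c ^ 2 + d ^ 2 := ⟨_, rfl⟩
    obtain ⟨n', hn'⟩ : ∃ n', n' = a' ^ 2 + b' ^ 2 + c' ^ 2 + d' ^ 2 := ⟨_, rfl⟩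
    rw [← hn] at h1
    rw [← hn'] at h2
    refine ⟨⟨mkHA a b c d a' b' c' d',
      mkHA (a / n) (-b / n) (-c / n) (-d / n) (a' / n') (-b' / n') (-c' / n') (-d' / n'),
      ?_, ?_⟩, rfl⟩ <;> rw [mkHA_mul, mkHA_one] <;> congr 1 <;> field_simp <;> linarith
end
end

section
/- For every q ∈ S³_𝒜, the element hat(q) is invertible with hat(q)⁻¹ = hat(q̄), and for every ξ ∈ ℝ⁴ ⊂ ℍ^𝒜 the element q ξ hat(q)⁻¹ again belongs to ℝ⁴ and satisfies H(q ξ hat(q)⁻¹, q ξ hat(q)⁻¹) = H(ξ, ξ); thus every q ∈ Spin(4) induces a linear isometry Φ(q) : ξ ↦ q ξ hat(q)⁻¹ of Euclidean ℝ⁴. -/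
/-!
The algebra of Lorentz numbers `𝒜 = {x + σy}` with `σ² = 1` is identified with the
product ring `ℝ × ℝ` via `x + σy ↦ (x + y, x − y)`, under which `σ ↦ (1, −1)`.
`ℍ^𝒜` is the quaternion algebra over this commutative ring.
-/

noncomputable section

theorem hatQ_re (a : HA) : (hatQ a).re = swapA a.re := rfl

theorem hatQ_imI (a : HA) : (hatQ a).imI = swapA a.imI := rfl

theorem hatQ_imJ (a : HA) : (hatQ a).imJ = swapA a.imJ := rfl

theorem hatQ_imK (a : HA) : (hatQ a).imK = swapA a.imK := rfl

theorem hatQ_mul (a b : HA) : hatQ (a * b) = hatQ a * hatQ b := by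
  ext <;> simp [hatQ_re, hatQ_imI, hatQ_imJ, hatQ_imK, swapA]

theorem hatQ_one : hatQ 1 = 1 := by
  ext <;> rfl

theorem hatQ_hatQ (a : HA) : hatQ (hatQ a) = a := by
  ext <;> simp [hatQ, swapA]

theorem star_hatQ (a : HA) : star (hatQ a) = hatQ (star a) := by
  ext <;> simp [hatQ_re, hatQ_imI, hatQ_imJ, hatQ_imK, swapA]

theorem mul_star_HA (a : HA) : a * star a = ((Hform a a : LorentzA) : HA) := by
  ext <;> simp [Hform] <;> ring

theorem star_mul_HA (a : HA) : star a * a = ((Hform a a : LorentzA) : HA) := by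
  ext <;> simp [Hform] <;> ring

theorem Hform_mul (a b : HA) : Hform (a * b) (a * b) = Hform a a * Hform b b := by
  simp only [Hform, Quaternion.re_mul, Quaternion.imI_mul, Quaternion.imJ_mul,
    Quaternion.imK_mul]
  ring

theorem Hform_hatQ_star (a : HA) :
    Hform (hatQ (star a)) (hatQ (star a)) = swapA (Hform a a) := by
  ext <;> simp [Hform, hatQ, swapA]

/-- For `q ∈ S³_𝒜`, `hat(q)` is invertible with inverse `hat(q̄)`, and
`ξ ↦ q ξ hat(q)⁻¹` preserves `ℝ⁴ ⊂ ℍ^𝒜` and the Euclidean form `H` on it; thus every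
`q ∈ Spin(4)` induces a linear isometry of `ℝ⁴`. -/
theorem spin_action_preserves_R4 (q : HA) (hq : Hform q q = 1) :
    (hatQ q * hatQ (star q) = 1 ∧ hatQ (star q) * hatQ q = 1) ∧
      ∀ ξ ∈ R4set, q * ξ * hatQ (star q) ∈ R4set ∧
        Hform (q * ξ * hatQ (star q)) (q * ξ * hatQ (star q)) = Hform ξ ξ := by
  have h1 : q * star q = 1 := by rw [mul_star_HA, hq]; rfl
  have h2 : star q * q = 1 := by rw [star_mul_HA, hq]; rfl
  refine ⟨⟨by rw [← hatQ_mul, h1, hatQ_one], by rw [← hatQ_mul, h2, hatQ_one]⟩, ?_⟩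
  intro ξ hξ
  have hξ' : hatQ (star ξ) = -ξ := hξ
  constructor
  · change hatQ (star (q * ξ * hatQ (star q))) = -(q * ξ * hatQ (star q))
    rw [star_mul, star_mul, star_hatQ, star_star, hatQ_mul, hatQ_mul, hatQ_hatQ, hξ']
    have key : ∀ a b c : HA, a * (-b * c) = -(a * b * c) := by
      intro a b c
      ext <;> simp <;> ring
    exact key _ _ _
  · rw [Hform_mul, Hform_mul, Hform_hatQ_star, hq]
    have : swapA 1 = 1 := rfl
    rw [this, one_mul, mul_one]
end
end

section
/- Let θ₁, θ₂ ∈ ℝ, θ = θ₁ + σθ₂ ∈ 𝒜, and q := cos θ · 1 + sin θ · I ∈ ℍ^𝒜. Then q ∈ S³_𝒜, and for every ξ = σx₀ + x₁I + x₂J + x₃K ∈ ℝ⁴ ⊂ ℍ^𝒜 one has q ξ hat(q)⁻¹ = σx₀' + x₁'I + x₂'J + x₃'K, where x₀' = cos(2θ₂)x₀ − sin(2θ₂)x₁, x₁' = sin(2θ₂)x₀ + cos(2θ₂)x₁, x₂' = cos(2θ₁)x₂ − sin(2θ₁)x₃, and x₃' = sin(2θ₁)x₂ + cos(2θ₁)x₃;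 i.e. Φ(q) is the rotation of angle 2θ₂ in the (x₀, x₁)-plane and of angle 2θ₁ in the (x₂, x₃)-plane. -/
/-!
The algebra of Lorentz numbers `𝒜 = {x + σy}` with `σ² = 1` is identified with the
product ring `ℝ × ℝ` via `x + σy ↦ (x + y, x − y)`, under which `σ ↦ (1, −1)`.
`ℍ^𝒜` is the quaternion algebra over this commutative ring.
-/

noncomputable section

/-- The element `cos θ · 1 + sin θ · I ∈ ℍ^𝒜`, where `θ = θ₁ + σθ₂`. -/
def spinOf (θ₁ θ₂ : ℝ) : HA :=
  ((cosA (mkA θ₁ θ₂) : LorentzA) : HA) + ((sinA (mkA θ₁ θ₂) : LorentzA) : HA) * Iq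

/-- The element of `ℍ^𝒜` with given coordinates. -/
def mkQ (a b c d : LorentzA) : HA := ⟨a, b, c, d⟩

lemma mkQ_mul (a b c d a₂ b₂ c₂ d₂ : LorentzA) : mkQ a b c d * mkQ a₂ b₂ c₂ d₂ =
    mkQ (a * a₂ - b * b₂ - c * c₂ - d * d₂) (a * b₂ + b * a₂ + c * d₂ - d * c₂)
      (a * c₂ - b * d₂ + c * a₂ + d * b₂) (a * d₂ + b * c₂ - c * b₂ + d * a₂) :=
  Quaternion.ext _ _ (Quaternion.re_mul _ _) (Quaternion.imI_mul _ _)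
    (Quaternion.imJ_mul _ _) (Quaternion.imK_mul _ _)

lemma mkQ_add (a b c d a₂ b₂ c₂ d₂ : LorentzA) : mkQ a b c d + mkQ a₂ b₂ c₂ d₂ =
    mkQ (a + a₂) (b + b₂) (c + c₂) (d + d₂) := rfl

lemma hat_star_mkQ (a b c d : LorentzA) :
    hatQ (star (mkQ a b c d)) = mkQ (swapA a) (swapA (-b)) (swapA (-c)) (swapA (-d)) :=
  Quaternion.ext _ _ (congrArg swapA (Quaternion.re_star (mkQ a b c d))) rfl rfl rfl

/-- Coordinates of `spinOf`. -/
lemma spinOf_eq (θ₁ θ₂ : ℝ) : spinOf θ₁ θ₂ =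
    mkQ (Real.cos (θ₁ + θ₂), Real.cos (θ₁ - θ₂)) (Real.sin (θ₁ + θ₂), Real.sin (θ₁ - θ₂)) 0 0 := by
  have h : spinOf θ₁ θ₂ = mkQ (cosA (mkA θ₁ θ₂)) 0 0 0
      + mkQ (sinA (mkA θ₁ θ₂)) 0 0 0 * mkQ 0 1 0 0 := rfl
  rw [h, mkQ_mul, mkQ_add]
  congr 1 <;> simp [cosA, sinA, mkA]

lemma embR4_eq (x₀ x₁ x₂ x₃ : ℝ) :
    embR4 x₀ x₁ x₂ x₃ = mkQ (x₀, -x₀) (x₁, x₁) (x₂, x₂) (x₃, x₃) := rfl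

lemma Hform_mkQ (a b c d a₂ b₂ c₂ d₂ : LorentzA) :
    Hform (mkQ a b c d) (mkQ a₂ b₂ c₂ d₂) = a * a₂ + b * b₂ + c * c₂ + d * d₂ := rfl

/-- For `θ = θ₁ + σθ₂` and `q = cos θ + sin θ · I`, one has `q ∈ S³_𝒜`,
and `Φ(q) : ξ ↦ q ξ hat(q)⁻¹` is the rotation of angle `2θ₂` in the `(x₀,x₁)`-plane
and of angle `2θ₁` in the `(x₂,x₃)`-plane of `ℝ⁴ ⊂ ℍ^𝒜`. -/
theorem spinOf_rotation (θ₁ θ₂ : ℝ) :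
    Hform (spinOf θ₁ θ₂) (spinOf θ₁ θ₂) = 1 ∧
    ∀ x₀ x₁ x₂ x₃ : ℝ,
      spinOf θ₁ θ₂ * embR4 x₀ x₁ x₂ x₃ * hatQ (star (spinOf θ₁ θ₂))
        = embR4 (Real.cos (2 * θ₂) * x₀ - Real.sin (2 * θ₂) * x₁)
            (Real.sin (2 * θ₂) * x₀ + Real.cos (2 * θ₂) * x₁)
            (Real.cos (2 * θ₁) * x₂ - Real.sin (2 * θ₁) * x₃)
            (Real.sin (2 * θ₁) * x₂ + Real.cos (2 * θ₁) * x₃) := by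
  have c2 : Real.cos (2 * θ₂) = Real.cos (θ₁ + θ₂) * Real.cos (θ₁ - θ₂)
      + Real.sin (θ₁ + θ₂) * Real.sin (θ₁ - θ₂) := by
    rw [← Real.cos_sub]; congr 1; ring
  have s2 : Real.sin (2 * θ₂) = Real.sin (θ₁ + θ₂) * Real.cos (θ₁ - θ₂)
      - Real.cos (θ₁ + θ₂) * Real.sin (θ₁ - θ₂) := by
    rw [← Real.sin_sub]; congr 1; ring
  have c1 : Real.cos (2 * θ₁) = Real.cos (θ₁ + θ₂) * Real.cos (θ₁ - θ₂)
      - Real.sin (θ₁ + θ₂) * Real.sin (θ₁ - θ₂) := by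
    rw [← Real.cos_add]; congr 1; ring
  have s1 : Real.sin (2 * θ₁) = Real.sin (θ₁ + θ₂) * Real.cos (θ₁ - θ₂)
      + Real.cos (θ₁ + θ₂) * Real.sin (θ₁ - θ₂) := by
    rw [← Real.sin_add]; congr 1; ring
  have p := Real.sin_sq_add_cos_sq (θ₁ + θ₂)
  have m := Real.sin_sq_add_cos_sq (θ₁ - θ₂)
  rw [c1, s1, c2, s2, spinOf_eq]
  generalize Real.cos (θ₁ + θ₂) = a at *
  generalize Real.sin (θ₁ + θ₂) = b at *
  generalize Real.cos (θ₁ - θ₂) = c at *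
  generalize Real.sin (θ₁ - θ₂) = d at *
  refine ⟨?_, fun x₀ x₁ x₂ x₃ => ?_⟩
  · rw [Hform_mkQ]
    ext <;> simp <;> linarith
  · rw [hat_star_mkQ, embR4_eq, embR4_eq, mkQ_mul, mkQ_mul]
    congr 1 <;> ext <;> simp [swapA] <;> ring
end
end

section
/- Let ξ, ξ' ∈ Im ℍ^𝒜 with ξ × ξ' = 0 (equivalently ξξ' = ξ'ξ), and suppose ξ is invertible in ℍ^𝒜. Then there exists λ ∈ 𝒜 such that ξ' = λξ. -/
/-!
The algebra of Lorentz numbers `𝒜 = {x + σy}` with `σ² = 1` is identified with the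
product ring `ℝ × ℝ` via `x + σy ↦ (x + y, x − y)`, under which `σ ↦ (1, −1)`.
`ℍ^𝒜` is the quaternion algebra over this commutative ring.
-/

noncomputable section

/-- If `ξ, ξ' ∈ Im ℍ^𝒜` satisfy `ξ × ξ' = 0` and `ξ` is invertible,
then `ξ' = λξ` for some `λ ∈ 𝒜`. -/
theorem cross_eq_zero_dependent (ξ ξ' : HA) (hξ : ξ.re = 0) (hξ' : ξ'.re = 0)
    (hcross : crossP ξ ξ' = 0) (hinv : IsUnit ξ) :
    ∃ lam : LorentzA, ξ' = (lam : HA) * ξ := by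
  have hc : ξ * ξ' - ξ' * ξ = 0 := by
    have h2 : (2 : ℝ) • crossP ξ ξ' = 0 := by rw [hcross, smul_zero]
    unfold crossP at h2
    rw [smul_smul] at h2
    norm_num at h2
    exact h2
  have half : ∀ a b : LorentzA, 2 * (a - b) = 0 → a = b := by
    intro a b h
    have h1 := congrArg Prod.fst h
    have h2 := congrArg Prod.snd h
    simp at h1 h2
    ext <;> linarith
  obtain ⟨v, hv⟩ := hinv.exists_right_inv
  have hN : Quaternion.normSq ξ * Quaternion.normSq v = 1 := by
    rw [← map_mul, hv, map_one]
  rw [Quaternion.normSq_def' ξ, hξ] at hN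
  have eI := congrArg QuaternionAlgebra.imI hc
  have eJ := congrArg QuaternionAlgebra.imJ hc
  have eK := congrArg QuaternionAlgebra.imK hc
  simp only [Quaternion.imI_sub, Quaternion.imJ_sub, Quaternion.imK_sub, Quaternion.imI_mul,
    Quaternion.imJ_mul, Quaternion.imK_mul, Quaternion.imI_zero, Quaternion.imJ_zero,
    Quaternion.imK_zero, hξ, hξ'] at eI eJ eK
  have fI := half (ξ.imJ * ξ'.imK) (ξ.imK * ξ'.imJ) (by linear_combination eI)
  have fJ := half (ξ.imK * ξ'.imI) (ξ.imI * ξ'.imK) (by linear_combination eJ)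
  have fK := half (ξ.imI * ξ'.imJ) (ξ.imJ * ξ'.imI) (by linear_combination eK)
  generalize Quaternion.normSq v = n at hN
  refine ⟨n * (ξ.imI * ξ'.imI + ξ.imJ * ξ'.imJ + ξ.imK * ξ'.imK), ?_⟩
  rw [Quaternion.coe_mul_eq_smul]
  apply Quaternion.ext
  · rw [Quaternion.re_smul, hξ, hξ', smul_zero]
  · rw [Quaternion.imI_smul, smul_eq_mul]
    linear_combination (-ξ'.imI) * hN - n * ξ.imJ * fK + n * ξ.imK * fJ
  · rw [Quaternion.imJ_smul, smul_eq_mul]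
    linear_combination (-ξ'.imJ) * hN - n * ξ.imK * fI + n * ξ.imI * fK
  · rw [Quaternion.imK_smul, smul_eq_mul]
    linear_combination (-ξ'.imK) * hN - n * ξ.imI * fJ + n * ξ.imJ * fI
end
end

section
/- Let V ⊆ Im ℍ^𝒜 be a two-dimensional real linear subspace such that ξ × ξ' = 0 for all ξ, ξ' ∈ V. Then there exists U ∈ Im ℍ^𝒜 with H(U, U) = 1 such that V = {aU : a ∈ 𝒜}. -/
/-!
The algebra of Lorentz numbers `𝒜 = {x + σy}` with `σ² = 1` is identified with the
product ring `ℝ × ℝ` via `x + σy ↦ (x + y, x − y)`, under which `σ ↦ (1, −1)`.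
`ℍ^𝒜` is the quaternion algebra over this commutative ring.
-/

noncomputable section

/-- A family of pairwise parallel vectors of `ℝ³` lies on a line with a unit direction. -/
lemma exists_unit_direction {ι : Type*} (x y z : ι → ℝ)
    (h1 : ∀ i j, x i * y j = x j * y i) (h2 : ∀ i j, x i * z j = x j * z i)
    (h3 : ∀ i j, y i * z j = y j * z i) :
    ∃ a b c : ℝ, a * a + b * b + c * c = 1 ∧
      ∀ i, ∃ t : ℝ, x i = t * a ∧ y i = t * b ∧ z i = t * c := by
  by_cases h : ∃ i, x i * x i + y i * y i + z i * z i ≠ 0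
  · obtain ⟨i, hi⟩ := h
    have hpos : 0 < x i * x i + y i * y i + z i * z i :=
      lt_of_le_of_ne (add_nonneg (add_nonneg (mul_self_nonneg _) (mul_self_nonneg _))
        (mul_self_nonneg _)) (Ne.symm hi)
    obtain ⟨r, hr, hrr⟩ : ∃ r : ℝ, r ≠ 0 ∧ r * r = x i * x i + y i * y i + z i * z i :=
      ⟨Real.sqrt _, (Real.sqrt_pos.2 hpos).ne', Real.mul_self_sqrt hpos.le⟩
    refine ⟨x i / r, y i / r, z i / r, ?_, fun j => ?_⟩
    · field_simp
      linarith
    · refine ⟨(x i * x j + y i * y j + z i * z j) / r, ?_, ?_, ?_⟩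
      · field_simp
        linear_combination (x j) * hrr + (-y i) * h1 i j + (-z i) * h2 i j
      · field_simp
        linear_combination (y j) * hrr + (x i) * h1 i j + (-z i) * h3 i j
      · field_simp
        linear_combination (z j) * hrr + (x i) * h2 i j + (y i) * h3 i j
  · push Not at h
    refine ⟨1, 0, 0, by norm_num, fun i => ⟨0, ?_, ?_, ?_⟩⟩ <;>
    nlinarith [h i, mul_self_nonneg (x i), mul_self_nonneg (y i), mul_self_nonneg (z i)]

/-- The real-linear map `a ↦ aU` from `𝒜` to `ℍ^𝒜`. -/
def mulU (U : HA) : LorentzA →ₗ[ℝ] HA where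
  toFun a := (a : HA) * U
  map_add' a b := by ext <;> simp <;> ring
  map_smul' r a := by ext <;> simp <;> ring

lemma cross_comps (ξ η : HA) (h : crossP ξ η = 0) :
    ξ.imI * η.imJ = η.imI * ξ.imJ ∧ ξ.imI * η.imK = η.imI * ξ.imK ∧
      ξ.imJ * η.imK = η.imJ * ξ.imK := by
  have h' : ξ * η - η * ξ = 0 := by
    have h2 : (2 : ℝ) • crossP ξ η = 0 := by rw [h, smul_zero]
    rw [crossP, smul_smul] at h2
    norm_num at h2
    exact h2
  have two : ∀ a b : LorentzA, a + a = b + b → a = b := by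
    intro a b hab
    have e1 := congrArg Prod.fst hab
    have e2 := congrArg Prod.snd hab
    simp only [Prod.fst_add, Prod.snd_add] at e1 e2
    ext <;> linarith
  have hI := congrArg QuaternionAlgebra.imI h'
  have hJ := congrArg QuaternionAlgebra.imJ h'
  have hK := congrArg QuaternionAlgebra.imK h'
  simp only [Quaternion.imI_sub, Quaternion.imI_mul, Quaternion.imJ_sub, Quaternion.imJ_mul,
    Quaternion.imK_sub, Quaternion.imK_mul, Quaternion.imI_zero, Quaternion.imJ_zero,
    Quaternion.imK_zero] at hI hJ hK
  refine ⟨two _ _ ?_, two _ _ ?_, two _ _ ?_⟩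
  · linear_combination hK
  · linear_combination -hJ
  · linear_combination hI

/-- A two-dimensional real subspace `V ⊆ Im ℍ^𝒜` on which the cross
product vanishes identically is an `𝒜`-line: `V = {aU : a ∈ 𝒜}` for some `U ∈ Im ℍ^𝒜`
with `H(U, U) = 1`. -/
theorem plane_with_zero_cross_is_A_line (V : Submodule ℝ HA)
    (hIm : ∀ ξ ∈ V, ξ.re = 0)
    (hdim : Module.finrank ℝ V = 2)
    (hcross : ∀ ξ ∈ V, ∀ ξ' ∈ V, crossP ξ ξ' = 0) :
    ∃ U : HA, U.re = 0 ∧ Hform U U = 1 ∧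
      (V : Set HA) = {x : HA | ∃ a : LorentzA, x = (a : HA) * U} := by
  have hc : ∀ i j : V, _ := fun i j => cross_comps i.1 j.1 (hcross _ i.2 _ j.2)
  obtain ⟨a, b, c, habc, h1⟩ := exists_unit_direction (fun i : V => i.1.imI.1)
    (fun i : V => i.1.imJ.1) (fun i : V => i.1.imK.1)
    (fun i j => congrArg Prod.fst (hc i j).1) (fun i j => congrArg Prod.fst (hc i j).2.1)
    (fun i j => congrArg Prod.fst (hc i j).2.2)
  obtain ⟨d, e, f, hdef, h2⟩ := exists_unit_direction (fun i : V => i.1.imI.2)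
    (fun i : V => i.1.imJ.2) (fun i : V => i.1.imK.2)
    (fun i j => congrArg Prod.snd (hc i j).1) (fun i j => congrArg Prod.snd (hc i j).2.1)
    (fun i j => congrArg Prod.snd (hc i j).2.2)
  obtain ⟨U, u0, u1, u2, u3⟩ : ∃ U : HA, U.re = 0 ∧ U.imI = (a, d) ∧ U.imJ = (b, e) ∧
      U.imK = (c, f) := ⟨⟨0, (a, d), (b, e), (c, f)⟩, rfl, rfl, rfl, rfl⟩
  refine ⟨U, u0, ?_, ?_⟩
  · ext
    · simpa [Hform, u0, u1, u2, u3] using habc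
    · simpa [Hform, u0, u1, u2, u3] using hdef
  · have hle : V ≤ LinearMap.range (mulU U) := by
      intro ξ hξ
      obtain ⟨t, t1, t2, t3⟩ := h1 ⟨ξ, hξ⟩
      obtain ⟨s, s1, s2, s3⟩ := h2 ⟨ξ, hξ⟩
      have h0 := hIm ξ hξ
      refine ⟨(t, s), ?_⟩
      simp only at t1 t2 t3 s1 s2 s3
      ext <;> simp [mulU, u0, u1, u2, u3, h0, t1, t2, t3, s1, s2, s3]
    have hfr : Module.finrank ℝ (LinearMap.range (mulU U)) ≤ Module.finrank ℝ V := by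
      rw [hdim]
      refine (LinearMap.finrank_range_le (mulU U)).trans ?_
      simp [LorentzA]
    have hEq := Submodule.eq_of_le_of_finrank_le hle hfr
    rw [hEq]
    ext ξ
    simp only [SetLike.mem_coe, LinearMap.mem_range, Set.mem_ofPred_eq]
    exact ⟨fun ⟨a, h⟩ => ⟨a, h.symm⟩, fun ⟨a, h⟩ => ⟨a, h.symm⟩⟩
end
end

section
/- Let ψ : 𝒜 → 𝒜 be differentiable (identifying 𝒜 with ℝ² as a real vector space) and conformal, i.e. dψ_a(σh) = σ·dψ_a(h) for every point a and every tangent vector h, where σ· denotes multiplication by σ in 𝒜. Then, in the coordinates (s, t) defined by x + σy = ((1+σ)/2)s + ((1−σ)/2)t (i.e. under the identification 𝒜 ≅ ℝ × ℝ), each component of ψ depends on one variable only: there exist functions ψ₁, ψ₂ : ℝ → ℝ such that ψ(s, t) = (ψ₁(s), ψ₂(t)). -/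
/-!
The algebra of Lorentz numbers `𝒜 = {x + σy}` with `σ² = 1` is identified with the
product ring `ℝ × ℝ` via `x + σy ↦ (x + y, x − y)`, under which `σ ↦ (1, −1)`.
`ℍ^𝒜` is the quaternion algebra over this commutative ring.
-/

noncomputable section

/-- A differentiable conformal map `ψ : 𝒜 → 𝒜` (i.e. `dψ` commutes
with multiplication by `σ`) splits, in the coordinates `(s, t)` given by
`𝒜 ≅ ℝ × ℝ`, into two functions of one variable: `ψ(s, t) = (ψ₁(s), ψ₂(t))`. -/
theorem conformal_map_splits (ψ : LorentzA → LorentzA) (hdiff : Differentiable ℝ ψ)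
    (hconf : ∀ a h : LorentzA, fderiv ℝ ψ a (σA * h) = σA * fderiv ℝ ψ a h) :
    ∃ ψ₁ ψ₂ : ℝ → ℝ, ∀ s t : ℝ, ψ (s, t) = (ψ₁ s, ψ₂ t) := by
  refine ⟨fun s => (ψ (s, 0)).1, fun t => (ψ (0, t)).2, fun s t => ?_⟩
  have h1 : ∀ a : LorentzA, (fderiv ℝ ψ a (0, 1)).1 = 0 := by
    intro a
    have h := hconf a (0, 1)
    have e : σA * ((0, 1) : LorentzA) = -((0, 1) : LorentzA) := by
      ext <;> simp [σA]
    rw [e, map_neg] at h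
    have h' := congrArg Prod.fst h
    simp [σA] at h'
    linarith
  have h2 : ∀ a : LorentzA, (fderiv ℝ ψ a (1, 0)).2 = 0 := by
    intro a
    have h := hconf a (1, 0)
    have e : σA * ((1, 0) : LorentzA) = ((1, 0) : LorentzA) := by
      ext <;> simp [σA]
    rw [e] at h
    have h' := congrArg Prod.snd h
    simp [σA] at h'
    linarith
  have d1 : ∀ u : ℝ, HasDerivAt (fun t : ℝ => (ψ (s, t)).1) 0 u := by
    intro u
    have hc : HasDerivAt (fun t : ℝ => ((s, t) : LorentzA)) (0, 1) u :=
      (hasDerivAt_const u s).prodMk (hasDerivAt_id u)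
    have h := (hdiff (s, u)).hasFDerivAt.comp_hasDerivAt u hc
    have h' := (ContinuousLinearMap.fst ℝ ℝ ℝ).hasFDerivAt.comp_hasDerivAt u h
    have e := h1 (s, u)
    rw [← e]
    exact h'
  have d2 : ∀ u : ℝ, HasDerivAt (fun r : ℝ => (ψ (r, t)).2) 0 u := by
    intro u
    have hc : HasDerivAt (fun r : ℝ => ((r, t) : LorentzA)) (1, 0) u :=
      (hasDerivAt_id u).prodMk (hasDerivAt_const u t)
    have h := (hdiff (u, t)).hasFDerivAt.comp_hasDerivAt u hc
    have h' := (ContinuousLinearMap.snd ℝ ℝ ℝ).hasFDerivAt.comp_hasDerivAt u h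
    have e := h2 (u, t)
    rw [← e]
    exact h'
  have c1 : (ψ (s, t)).1 = (ψ (s, 0)).1 :=
    is_const_of_deriv_eq_zero (fun u => (d1 u).differentiableAt) (fun u => (d1 u).deriv) t 0
  have c2 : (ψ (s, t)).2 = (ψ (0, t)).2 :=
    is_const_of_deriv_eq_zero (fun u => (d2 u).differentiableAt) (fun u => (d2 u).deriv) s 0
  exact Prod.ext c1 c2
end
end

section
/- Let ψ₁, ψ₂ : ℝ → ℝ, k ∈ ℤ, and m₁, M₁, m₂, M₂ ∈ ℝ be such that m₁ ≤ ψ₁(s) ≤ M₁ and m₂ ≤ ψ₂(t) ≤ M₂ for all s, t ∈ ℝ, and suppose (2k+1)π < m₁ − M₂ and M₁ − m₂ < 2(k+1)π. Then there exists α ∈ ℝ such that sin(ψ₁(s) − α) > 0 and sin(ψ₂(t) − α) > 0 for all s, t ∈ ℝ. -/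
open Real

/-- If `ψ₁, ψ₂ : ℝ → ℝ` satisfy `m₁ ≤ ψ₁ ≤ M₁`, `m₂ ≤ ψ₂ ≤ M₂` with
`(2k+1)π < m₁ − M₂` and `M₁ − m₂ < 2(k+1)π`, then there is `α ∈ ℝ` with
`sin(ψ₁(s) − α) > 0` and `sin(ψ₂(t) − α) > 0` for all `s, t`. -/
theorem exists_alpha_sin_pos (ψ₁ ψ₂ : ℝ → ℝ) (k : ℤ) (m₁ M₁ m₂ M₂ : ℝ)
    (h₁ : ∀ s : ℝ, m₁ ≤ ψ₁ s ∧ ψ₁ s ≤ M₁)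
    (h₂ : ∀ t : ℝ, m₂ ≤ ψ₂ t ∧ ψ₂ t ≤ M₂)
    (hlow : (2 * (k : ℝ) + 1) * π < m₁ - M₂)
    (hhigh : M₁ - m₂ < 2 * ((k : ℝ) + 1) * π) :
    ∃ α : ℝ, (∀ s : ℝ, 0 < Real.sin (ψ₁ s - α)) ∧ (∀ t : ℝ, 0 < Real.sin (ψ₂ t - α)) := by
  have a := h₁ 0
  have b := h₂ 0
  refine ⟨(M₂ + (2 * (k : ℝ) + 1) * π + m₁) / 2, fun s => ?_, fun t => ?_⟩
  · have c := h₁ s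
    apply Real.sin_pos_of_pos_of_lt_pi <;> linarith
  · have c := h₂ t
    rw [← Real.sin_add_int_mul_two_pi _ (k + 1)]
    push_cast
    apply Real.sin_pos_of_pos_of_lt_pi <;> linarith
end

section
/- Let g : ℝ → ℍ be differentiable, ψ : ℝ → ℝ, and α ∈ ℝ, and suppose g'(s) = (cos ψ(s) · J + sin ψ(s) · K) · g(s) for all s ∈ ℝ. Set J_α := cos α · J + sin α · K and γ(s) := ḡ(s) · J_α · g(s). Then γ is differentiable with γ'(s) = 2 sin(ψ(s) − α) · ḡ(s) · I · g(s) for all s ∈ ℝ. -/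
noncomputable section

/-- The imaginary unit `I` of the real quaternions. -/
def I₁ : Quaternion ℝ := ⟨0, 1, 0, 0⟩
/-- The imaginary unit `J` of the real quaternions. -/
def J₁ : Quaternion ℝ := ⟨0, 0, 1, 0⟩
/-- The imaginary unit `K` of the real quaternions. -/
def K₁ : Quaternion ℝ := ⟨0, 0, 0, 1⟩

theorem I_re : I₁.re = 0 := rfl
theorem I_imI : I₁.imI = 1 := rfl
theorem I_imJ : I₁.imJ = 0 := rfl
theorem I_imK : I₁.imK = 0 := rfl
theorem J_re : J₁.re = 0 := rfl
theorem J_imI : J₁.imI = 0 := rfl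
theorem J_imJ : J₁.imJ = 1 := rfl
theorem J_imK : J₁.imK = 0 := rfl
theorem K_re : K₁.re = 0 := rfl
theorem K_imI : K₁.imI = 0 := rfl
theorem K_imJ : K₁.imJ = 0 := rfl
theorem K_imK : K₁.imK = 1 := rfl

/-- If `g : ℝ → ℍ` is differentiable with
`g'(s) = (cos ψ(s)·J + sin ψ(s)·K)·g(s)`, then with `J_α = cos α·J + sin α·K` the curve
`γ(s) = ḡ(s)·J_α·g(s)` is differentiable with `γ'(s) = 2 sin(ψ(s) − α)·ḡ(s)·I·g(s)`. -/
theorem hopf_projection_derivative (g : ℝ → Quaternion ℝ) (hg : Differentiable ℝ g)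
    (ψ : ℝ → ℝ) (α : ℝ)
    (hg' : ∀ s : ℝ, deriv g s = (Real.cos (ψ s) • J₁ + Real.sin (ψ s) • K₁) * g s) :
    Differentiable ℝ (fun s => star (g s) * (Real.cos α • J₁ + Real.sin α • K₁) * g s) ∧
    ∀ s : ℝ, deriv (fun s => star (g s) * (Real.cos α • J₁ + Real.sin α • K₁) * g s) s
      = (2 * Real.sin (ψ s - α)) • (star (g s) * I₁ * g s) := by
  have : StarModule ℝ (Quaternion ℝ) := ⟨fun r q => by ext <;> simp⟩
  have key : ∀ s : ℝ, HasDerivAt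
      (fun s => star (g s) * (Real.cos α • J₁ + Real.sin α • K₁) * g s)
      ((2 * Real.sin (ψ s - α)) • (star (g s) * I₁ * g s)) s := by
    intro s
    have h := (hg s).hasDerivAt
    rw [hg' s] at h
    have h2 := (h.star.mul_const (Real.cos α • J₁ + Real.sin α • K₁)).mul h
    have hcomm : star (Real.cos (ψ s) • J₁ + Real.sin (ψ s) • K₁) *
          (Real.cos α • J₁ + Real.sin α • K₁) +
        (Real.cos α • J₁ + Real.sin α • K₁) * (Real.cos (ψ s) • J₁ + Real.sin (ψ s) • K₁)
        = (2 * Real.sin (ψ s - α)) • I₁ := by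
      rw [Real.sin_sub]
      ext <;> simp [I_re, I_imI, I_imJ, I_imK, J_re, J_imI, J_imJ, J_imK, K_re, K_imI, K_imJ, K_imK] <;> ring
    refine h2.congr_deriv ?_
    rw [star_mul, ← smul_mul_assoc, ← mul_smul_comm, ← hcomm]
    simp only [mul_add, add_mul, mul_assoc]
  exact ⟨fun s => (key s).differentiableAt, fun s => (key s).deriv⟩
end
end
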